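/- There exists a constant C > 0 with the following property: for every continuous map u : O → ℝ³ which is piecewise affine with respect to the triangulation T⁽¹⁾ of O (determined by cutting O along the diagonal P₁P₄), such that det Du > 0 almost everywhere in O and u(O) is convex, one has dist²(Du, SO(3)) ≤ C · Σ_{PᵢPⱼ edge of O} (|u(Pᵢ) − u(Pⱼ)| − 1)² almost everywhere in O, where the sum runs over the 12 edges of O. -/

import Mathlib

/- STATEMENT 2 (Lemma `lemma:ottaedro`): there is `C > 0` such that for every
continuous map `u : O → ℝ³` which is piecewise affine with respect to the
triangulation `T⁽¹⁾` of the octahedron `O` (cut along the diagonal `P₁P₄`),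
with `det Du > 0` a.e. in `O` and `u(O)` convex, one has
`dist²(Du, SO(3)) ≤ C ∑_{PᵢPⱼ edge} (|u(Pᵢ) − u(Pⱼ)| − 1)²` a.e. in `O`.

Such a map is determined by its values `u : Fin 6 → ℝ³` at the vertices
`P₁,…,P₆` of `O`; on each tetrahedron `t` of `T⁽¹⁾` its gradient is the
constant matrix `gradMat u t`, its image of `O` is `octImage u`, and the
almost-everywhere statements amount to statements for each of the four
tetrahedra of `T⁽¹⁾`. -/

noncomputable section

open scoped BigOperators

/-- SO(3) as a set of 3×3 real matrices. -/
def SO3 : Set (Matrix (Fin 3) (Fin 3) ℝ) :=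
  {R | R.transpose * R = 1 ∧ R.det = 1}

/-- Square of the Frobenius norm of a 3×3 matrix. -/
def frobSq (F : Matrix (Fin 3) (Fin 3) ℝ) : ℝ :=
  ∑ i : Fin 3, ∑ j : Fin 3, (F i j) ^ 2

/-- Square of the (Frobenius) distance of `F` from `SO(3)`. -/
def distSqSO3 (F : Matrix (Fin 3) (Fin 3) ℝ) : ℝ :=
  sInf {s : ℝ | ∃ R ∈ SO3, s = frobSq (F - R)}

/-- Euclidean norm on ℝ³. -/
def enorm3 (v : Fin 3 → ℝ) : ℝ :=
  Real.sqrt (∑ i : Fin 3, (v i) ^ 2)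

/-- The vertices of the octahedron `O`. -/
def octP : Fin 6 → (Fin 3 → ℝ) :=
  ![![0, 0, 0], ![1, 0, 0], ![0, 1, 0], ![1, 1, 0],
    ![1/2, 1/2, Real.sqrt 2 / 2], ![1/2, 1/2, -(Real.sqrt 2 / 2)]]

/-- Triangulation `T⁽¹⁾` (cut along the diagonal `P₁P₄`). -/
def tets1 : List (Fin 6 × Fin 6 × Fin 6 × Fin 6) :=
  [(0, 1, 3, 4), (0, 1, 3, 5), (0, 2, 3, 4), (0, 2, 3, 5)]

/-- The 12 edges of the octahedron `O`: all pairs of distinct vertices except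
the three diagonal pairs `{1,4}`, `{2,3}`, `{5,6}` (in `Fin 6` indexing:
`{0,3}`, `{1,2}`, `{4,5}`). -/
def octEdges : List (Fin 6 × Fin 6) :=
  [(0, 1), (0, 2), (0, 4), (0, 5), (1, 3), (1, 4), (1, 5),
   (2, 3), (2, 4), (2, 5), (3, 4), (3, 5)]

/-- The 3×3 matrix whose columns are the edge vectors of the tetrahedron with
vertices `q t.1, q t.2.1, q t.2.2.1, q t.2.2.2` emanating from the first vertex. -/
def colMat (q : Fin 6 → Fin 3 → ℝ) (t : Fin 6 × Fin 6 × Fin 6 × Fin 6) :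
    Matrix (Fin 3) (Fin 3) ℝ :=
  Matrix.of fun i j =>
    (![q t.2.1 - q t.1, q t.2.2.1 - q t.1, q t.2.2.2 - q t.1] j) i

/-- The constant gradient `Du` of the piecewise affine map on the tetrahedron `t`. -/
def gradMat (u : Fin 6 → Fin 3 → ℝ) (t : Fin 6 × Fin 6 × Fin 6 × Fin 6) :
    Matrix (Fin 3) (Fin 3) ℝ :=
  colMat u t * (colMat octP t)⁻¹

/-- Determinant of the gradient on the tetrahedron `t`. -/
def detGrad (u : Fin 6 → Fin 3 → ℝ) (t : Fin 6 × Fin 6 × Fin 6 × Fin 6) : ℝ :=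
  (colMat u t).det / (colMat octP t).det

/-- The image `u⁽¹⁾(O)` of the octahedron under the piecewise affine extension
of `u` with respect to `T⁽¹⁾`. -/
def octImage (u : Fin 6 → Fin 3 → ℝ) : Set (Fin 3 → ℝ) :=
  ⋃ t ∈ tets1, convexHull ℝ ({u t.1, u t.2.1, u t.2.2.1, u t.2.2.2} : Set (Fin 3 → ℝ))

/-!
Write `ε` for the root of the sum. If `ε` is bounded below, the triangle inequality bounds the
gradients by a multiple of `ε`. If `ε` is small, it suffices that the cut diagonal `P₁P₄` keeps its
length `√2` up to `O(ε)`: then the Gram matrices of the image tetrahedra are close to those of the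
regular octahedron, and positive determinants put the orthogonal polar factor in `SO(3)`.

The four image tetrahedra wind once around the image of the cut diagonal. If that image is too long,
every dihedral angle at it exceeds a right angle, which is impossible. For the opposite bound, let
`p` be `oneAddCos` of the cut diagonal and `q`, `r` those of the other two. Convexity of the image
makes the cone at each equatorial vertex spanned by the cut diagonal meet the segment joining the
two neighbouring vertices; pairing the resulting linear relation with the sums of opposite edge
vectors yields `p q ≤ 1 + O(ε)` and `p r ≤ 1 + O(ε)`. As `q r ≥ 1 - O(ε)` by the Cauchy-Schwarz
inequality, `p ≤ 1 + O(ε)`, so the diagonal is not too short either.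
-/

section Frobenius

open Matrix
open scoped Matrix.Norms.Frobenius MatrixOrder

variable {n : Type*} [Fintype n]

lemma frobenius_norm_sq_eq_sum (A : Matrix n n ℝ) : ‖A‖ ^ 2 = ∑ i, ∑ j, A i j ^ 2 := by
  rw [frobenius_norm_def, ← Real.sqrt_eq_rpow, Real.sq_sqrt (by positivity)]
  simp

lemma frobenius_norm_sq_eq_trace (A : Matrix n n ℝ) : ‖A‖ ^ 2 = (Aᵀ * A).trace := by
  rw [frobenius_norm_sq_eq_sum, Finset.sum_comm]
  simp [trace, mul_apply, sq]

lemma frobenius_norm_le_card_mul {A : Matrix n n ℝ} {r : ℝ} (hA : ∀ i j, |A i j| ≤ r) :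
    ‖A‖ ≤ Fintype.card n * r := by
  rcases isEmpty_or_nonempty n with _ | ⟨⟨i₀⟩⟩
  · simp [frobenius_norm_def]
  have hr : 0 ≤ r := (abs_nonneg _).trans (hA i₀ i₀)
  refine le_of_sq_le_sq ?_ (by positivity)
  calc ‖A‖ ^ 2 = ∑ i, ∑ j, A i j ^ 2 := frobenius_norm_sq_eq_sum A
    _ ≤ ∑ _i : n, ∑ _j : n, r ^ 2 :=
        Finset.sum_le_sum fun i _ => Finset.sum_le_sum fun j _ => sq_le_sq.2 <| by
          simpa [abs_of_nonneg hr] using hA i j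
    _ = (Fintype.card n * r) ^ 2 := by
        simp only [Finset.sum_const, Finset.card_univ, nsmul_eq_mul]
        ring

variable [DecidableEq n]

lemma frobenius_norm_orthogonal_mul {R : Matrix n n ℝ} (hR : Rᵀ * R = 1) (A : Matrix n n ℝ) :
    ‖R * A‖ = ‖A‖ := by
  refine (sq_eq_sq₀ (norm_nonneg _) (norm_nonneg _)).1 ?_
  rw [frobenius_norm_sq_eq_trace, frobenius_norm_sq_eq_trace, transpose_mul, Matrix.mul_assoc,
    ← Matrix.mul_assoc Rᵀ, hR, Matrix.one_mul]

lemma frobenius_norm_le_norm_add_one_mul {S : Matrix n n ℝ} (hS : S.PosSemidef)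
    (A : Matrix n n ℝ) : ‖A‖ ≤ ‖(S + 1) * A‖ := by
  refine le_of_sq_le_sq ?_ (norm_nonneg _)
  have hSt : Sᵀ = S := by simpa using hS.isHermitian.eq
  have hcross : 0 ≤ (Aᵀ * S * A).trace := by
    simpa using (hS.conjTranspose_mul_mul_same A).trace_nonneg
  have hexp : ‖(S + 1) * A‖ ^ 2 = ‖S * A‖ ^ 2 + 2 * (Aᵀ * S * A).trace + ‖A‖ ^ 2 := by
    simp only [frobenius_norm_sq_eq_trace, transpose_mul, transpose_add, hSt,
      Matrix.add_mul, Matrix.mul_add, Matrix.one_mul, trace_add, Matrix.mul_assoc]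
    ring
  nlinarith [sq_nonneg ‖S * A‖]

theorem exists_specialOrthogonal_norm_sub_le {F : Matrix n n ℝ} (hF : 0 < F.det) :
    ∃ R ∈ specialOrthogonalGroup n ℝ, ‖F - R‖ ≤ ‖Fᵀ * F - 1‖ := by
  set S := CFC.abs F
  have hS : S.PosSemidef := (CFC.abs_nonneg F).posSemidef
  have hSt : Sᵀ = S := by simpa using hS.isHermitian.eq
  have hSS : S * S = Fᵀ * F := by
    simpa only [star_eq_conjTranspose, conjTranspose_eq_transpose_of_trivial]
      using CFC.abs_mul_abs F
  have hSdet : 0 < S.det := by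
    have := congrArg det hSS
    simp only [det_mul, det_transpose] at this
    nlinarith [hS.det_nonneg]
  have hSunit : IsUnit S.det := hSdet.ne'.isUnit
  have hR : (F * S⁻¹)ᵀ * (F * S⁻¹) = 1 := by
    rw [transpose_mul, transpose_nonsing_inv, hSt, Matrix.mul_assoc, ← Matrix.mul_assoc Fᵀ, ← hSS,
      Matrix.mul_assoc, mul_nonsing_inv _ hSunit, Matrix.mul_one, nonsing_inv_mul _ hSunit]
  have hRdet : (F * S⁻¹).det = 1 := by
    have hsq : (F * S⁻¹).det ^ 2 = 1 := by
      simpa only [det_mul, det_transpose, det_one, sq] using congrArg det hR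
    have hpos : 0 < (F * S⁻¹).det := by
      rw [det_mul, det_nonsing_inv, Ring.inverse_eq_inv']
      positivity
    nlinarith
  refine ⟨F * S⁻¹,
    mem_specialOrthogonalGroup_iff.2 ⟨(mem_orthogonalGroup_iff' n ℝ).2 hR, hRdet⟩, ?_⟩
  calc ‖F - F * S⁻¹‖ = ‖F * S⁻¹ * (S - 1)‖ := by
        rw [Matrix.mul_sub, Matrix.mul_assoc, nonsing_inv_mul _ hSunit, Matrix.mul_one,
          Matrix.mul_one]
    _ = ‖S - 1‖ := frobenius_norm_orthogonal_mul hR _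
    _ ≤ ‖(S + 1) * (S - 1)‖ := frobenius_norm_le_norm_add_one_mul hS _
    _ = ‖Fᵀ * F - 1‖ := by rw [← hSS]; noncomm_ring

theorem exists_specialOrthogonal_norm_mul_inv_sub_le {U M : Matrix n n ℝ} (h : 0 < U.det / M.det) :
    ∃ R ∈ specialOrthogonalGroup n ℝ,
      ‖U * M⁻¹ - R‖ ≤ ‖M⁻¹‖ ^ 2 * ‖Uᵀ * U - Mᵀ * M‖ := by
  have hM : IsUnit M.det := isUnit_iff_ne_zero.2 fun hM => by simp [hM] at h
  have hdet : 0 < (U * M⁻¹).det := by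
    rwa [det_mul, det_nonsing_inv, Ring.inverse_eq_inv', ← div_eq_mul_inv]
  obtain ⟨R, hR, hle⟩ := exists_specialOrthogonal_norm_sub_le hdet
  have hM1 : M * M⁻¹ = 1 := mul_nonsing_inv _ hM
  have hgram : (U * M⁻¹)ᵀ * (U * M⁻¹) - 1 = M⁻¹ᵀ * (Uᵀ * U - Mᵀ * M) * M⁻¹ := by
    have : M⁻¹ᵀ * (Mᵀ * M) * M⁻¹ = 1 := by
      rw [Matrix.mul_assoc, Matrix.mul_assoc, hM1, Matrix.mul_one, ← transpose_mul, hM1,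
        transpose_one]
    rw [Matrix.mul_sub, Matrix.sub_mul, this, transpose_mul]
    simp only [Matrix.mul_assoc]
  refine ⟨R, hR, hle.trans ?_⟩
  calc ‖(U * M⁻¹)ᵀ * (U * M⁻¹) - 1‖ ≤ ‖M⁻¹ᵀ‖ * ‖Uᵀ * U - Mᵀ * M‖ * ‖M⁻¹‖ := by
        rw [hgram]
        exact (frobenius_norm_mul _ _).trans (by gcongr; exact frobenius_norm_mul _ _)
    _ = ‖M⁻¹‖ ^ 2 * ‖Uᵀ * U - Mᵀ * M‖ := by rw [frobenius_norm_transpose]; ring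

end Frobenius

section Crossing

open Filter Topology AffineMap

variable {E : Type*} [AddCommGroup E] [Module ℝ E]

lemma mem_convexHull_of_mem_convexHull_insert (L : E →ₗ[ℝ] ℝ) {s : Set E} {k : ℝ} {b x : E}
    (hs : s.Nonempty) (hsL : ∀ y ∈ s, L y = k) (hb : L b ≠ k)
    (hx : x ∈ convexHull ℝ (insert b s)) (hxL : L x = k) : x ∈ convexHull ℝ s := by
  rw [convexHull_insert hs, mem_convexJoin] at hx
  obtain ⟨b', hb', y, hy, hxy⟩ := hx
  obtain rfl : b' = b := hb'
  have hyL : L y = k := convexHull_min hsL (convex_hyperplane L.isLinear k) hy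
  obtain ⟨α, β, -, -, hαβ, rfl⟩ := hxy
  have hα : α * (L b' - k) = 0 := by
    simp only [map_add, map_smul, smul_eq_mul, hyL] at hxL
    linear_combination hxL - k * hαβ
  obtain rfl : α = 0 := (mul_eq_zero.1 hα).resolve_right (sub_ne_zero.2 hb)
  obtain rfl : β = 1 := by simpa using hαβ
  simpa using hy

lemma exists_mem_segment_map_eq (L : E →ₗ[ℝ] ℝ) {b c : E} {k : ℝ} (hb : L b ≤ k) (hc : k ≤ L c) :
    ∃ y ∈ segment ℝ b c, L y = k := by
  have hk : k ∈ segment ℝ (L b) (L c) := by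
    rw [segment_eq_Icc (hb.trans hc)]
    exact ⟨hb, hc⟩
  rwa [← L.coe_toAffineMap, ← image_segment ℝ L.toAffineMap b c] at hk

lemma exists_sub_eq_of_mem_convexHull_triple {e a d x : E} (hx : x ∈ convexHull ℝ {e, a, d}) :
    ∃ α δ : ℝ, 0 ≤ α ∧ 0 ≤ δ ∧ x - e = α • (a - e) + δ • (d - e) := by
  rw [convexHull_insert (by simp), convexHull_pair, mem_convexJoin] at hx
  obtain ⟨_, rfl, y, ⟨α, δ, hα, hδ, hαδ, rfl⟩, hxy⟩ := hx
  obtain ⟨r, s, -, hs, hrs, rfl⟩ := hxy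
  refine ⟨s * α, s * δ, by positivity, by positivity, ?_⟩
  obtain rfl : α = 1 - δ := by linarith
  obtain rfl : r = 1 - s := by linarith
  module

lemma notMem_convexHull_of_lt (L : E →ₗ[ℝ] ℝ) {s : Set E} {x : E} (h : ∀ y ∈ s, L y < L x) :
    x ∉ convexHull ℝ s := fun hx =>
  lt_irrefl (L x) (convexHull_min h (convex_halfSpace_lt L.isLinear _) hx)

lemma eventually_map_lineMap_pos (L : E →ₗ[ℝ] ℝ) (y : E) {e : E} {k : ℝ} (h : k < L e) :
    ∀ᶠ t in 𝓝[>] (0 : ℝ), k < L (lineMap e y t) := by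
  have hcont : Continuous fun t : ℝ => L (lineMap e y t) := by
    simp only [lineMap_apply_module, map_add, map_smul, smul_eq_mul]
    fun_prop
  exact (continuousAt_const.eventually_lt hcont.continuousAt (by simpa using h)).filter_mono
    nhdsWithin_le_nhds

/-- The union of the tetrahedra `a d (v i) (v (i + 1))`, glued along the segment from `a` to `d`. -/
def tetRing (a d : E) (v : Fin 4 → E) : Set E :=
  ⋃ i, convexHull ℝ {a, d, v i, v (i + 1)}

lemma exists_lineMap_mem_convexHull_triple {a d : E} {v : Fin 4 → E} {L : Fin 4 → E →ₗ[ℝ] ℝ}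
    (hd : ∀ i, L i d = L i a) (hself : ∀ i, L i (v i) = L i a)
    (hnext : ∀ i, L i a < L i (v (i + 1))) (hprev : ∀ i, L (i + 1) (v i) < L (i + 1) a)
    (hconv : Convex ℝ (tetRing a d v)) :
    ∃ y ∈ segment ℝ (v 0) (v 2), ∃ t > (0 : ℝ), lineMap (v 1) y t ∈ convexHull ℝ {v 1, a, d} := by
  have hmem : ∀ i, v i ∈ tetRing a d v := fun i =>
    Set.mem_iUnion.2 ⟨i, subset_convexHull ℝ _ (by simp)⟩
  have h10 : L 1 (v 0) < L 1 a := hprev 0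
  have h12 : L 1 a < L 1 (v 2) := hnext 1
  have h21 : L 2 (v 1) < L 2 a := hprev 1
  obtain ⟨y, hy, hyL⟩ := exists_mem_segment_map_eq (L 1) h10.le h12.le
  obtain ⟨t, hx_fst, hx_snd, ht₀, ht₁⟩ := ((eventually_map_lineMap_pos (L 0) y (hnext 0)).and
    ((eventually_map_lineMap_pos (-L 2) y (neg_lt_neg h21)).and
    (Ioo_mem_nhdsGT zero_lt_one))).exists
  refine ⟨y, hy, t, ht₀, ?_⟩
  set x := lineMap (v 1) y t with hx_def
  replace hx_snd : L 2 x < L 2 a := neg_lt_neg_iff.1 hx_snd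
  have hx : x ∈ tetRing a d v :=
    hconv.lineMap_mem (hmem 1) (hconv.segment_subset (hmem 0) (hmem 2) hy) ⟨ht₀.le, ht₁.le⟩
  have hxL : L 1 x = L 1 a := by
    simp only [hx_def, lineMap_apply_module, map_add, map_smul, smul_eq_mul, hyL, hself]
    ring
  have hface : ∀ z ∈ ({v 1, a, d} : Set E), L 1 z = L 1 a := by simp [hd, hself]
  obtain ⟨i, hi⟩ := Set.mem_iUnion.1 hx
  fin_cases i
  · refine mem_convexHull_of_mem_convexHull_insert (L 1) (by simp) hface h10.ne ?_ hxL
    exact convexHull_mono (by grind) hi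
  · refine mem_convexHull_of_mem_convexHull_insert (L 1) (by simp) hface h12.ne' ?_ hxL
    exact convexHull_mono (by grind) hi
  · refine absurd hi (notMem_convexHull_of_lt (-L 2) ?_)
    simpa [hd, hself] using ⟨hx_snd, hx_snd.trans (hnext 2)⟩
  · refine absurd hi (notMem_convexHull_of_lt (L 0) ?_)
    simpa [hd, hself, and_comm] using ⟨hx_fst, LT.lt.trans (hprev 3) hx_fst⟩

theorem exists_cone_relation_of_convex {ω : E →ₗ[ℝ] E →ₗ[ℝ] ℝ} (hω : ω.IsAlt) {a d : E}
    {v : Fin 4 → E} (hd : ω (d - a) = 0) (hpos : ∀ i, 0 < ω (v i - a) (v (i + 1) - a))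
    (hconv : Convex ℝ (tetRing a d v)) :
    ∃ α δ β γ : ℝ, 0 ≤ α ∧ 0 ≤ δ ∧ 0 ≤ β ∧ 0 ≤ γ ∧ β + γ = 1 ∧
      α • (a - v 1) + δ • (d - v 1) = β • (v 0 - v 1) + γ • (v 2 - v 1) := by
  have hωd : ∀ i, ω (v i - a) d = ω (v i - a) a := fun i => by
    rw [← sub_eq_zero, ← map_sub, ← hω.neg, hd, LinearMap.zero_apply, neg_zero]
  have hωself : ∀ i, ω (v i - a) (v i) = ω (v i - a) a := fun i => by
    rw [← sub_eq_zero, ← map_sub, hω]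
  have hωnext : ∀ i, ω (v i - a) a < ω (v i - a) (v (i + 1)) := fun i => by
    rw [← sub_pos, ← map_sub]
    exact hpos i
  have hωprev : ∀ i, ω (v (i + 1) - a) (v i) < ω (v (i + 1) - a) a := fun i => by
    rw [← sub_neg, ← map_sub, ← hω.neg]
    exact neg_neg_of_pos (hpos i)
  obtain ⟨_, ⟨β, γ, hβ, hγ, hβγ, rfl⟩, t, ht, hx⟩ :=
    exists_lineMap_mem_convexHull_triple hωd hωself hωnext hωprev hconv
  obtain ⟨α, δ, hα, hδ, hαδ⟩ := exists_sub_eq_of_mem_convexHull_triple hx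
  refine ⟨t⁻¹ * α, t⁻¹ * δ, β, γ, by positivity, by positivity, hβ, hγ, hβγ, ?_⟩
  calc (t⁻¹ * α) • (a - v 1) + (t⁻¹ * δ) • (d - v 1)
      = t⁻¹ • (lineMap (v 1) (β • v 0 + γ • v 2) t - v 1) := by rw [hαδ]; module
    _ = β • v 0 + γ • v 2 - v 1 := by
        rw [lineMap_apply, vsub_eq_sub, vadd_eq_add, add_sub_cancel_right,
          inv_smul_smul₀ ht.ne']
    _ = β • (v 0 - v 1) + γ • (v 2 - v 1) := by
        obtain rfl : β = 1 - γ := by linarith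
        module

end Crossing

section Metric

variable {X : Type*} [PseudoMetricSpace X]

/-- The distance of two points is almost one, with an error of at most `η` in its square. -/
def IsNearUnit (η : ℝ) (x y : X) : Prop :=
  |dist x y ^ 2 - 1| ≤ η

lemma IsNearUnit.symm {η : ℝ} {x y : X} (h : IsNearUnit η x y) : IsNearUnit η y x := by
  rwa [IsNearUnit, dist_comm]

/-- One plus the cosine of the angle under which `x` and `y` are seen from a point at distance
one from both of them. It is one for the diagonals of a regular octahedron of edge length one. -/
def oneAddCos (x y : X) : ℝ :=
  2 - dist x y ^ 2 / 2

lemma oneAddCos_le_two (x y : X) : oneAddCos x y ≤ 2 := by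
  rw [oneAddCos]
  linarith [sq_nonneg (dist x y)]

lemma oneAddCos_comm (x y : X) : oneAddCos x y = oneAddCos y x := by
  rw [oneAddCos, oneAddCos, dist_comm]

/-- The twelve edges of an octahedron with poles `a`, `d` and equatorial cycle `v` have almost
unit length. -/
structure IsNearOctahedron (η : ℝ) (a d : X) (v : Fin 4 → X) : Prop where
  fst : ∀ i, IsNearUnit η a (v i)
  snd : ∀ i, IsNearUnit η d (v i)
  cycle : ∀ i, IsNearUnit η (v i) (v (i + 1))

namespace IsNearOctahedron

variable {η : ℝ} {a d : X} {v : Fin 4 → X}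

lemma rotate (h : IsNearOctahedron η a d v) : IsNearOctahedron η a d fun i => v (i + 1) :=
  ⟨fun i => h.fst (i + 1), fun i => h.snd (i + 1), fun i => h.cycle (i + 1)⟩

lemma swap (h : IsNearOctahedron η a d v) :
    IsNearOctahedron η (v 0) (v 2) ![a, v 1, d, v 3] := by
  refine ⟨fun i => ?_, fun i => ?_, fun i => ?_⟩ <;> fin_cases i
  exacts [(h.fst 0).symm, h.cycle 0, (h.snd 0).symm, (h.cycle 3).symm, (h.fst 2).symm,
    (h.cycle 1).symm, (h.snd 2).symm, h.cycle 2, h.fst 1, (h.snd 1).symm, h.snd 3, (h.fst 3).symm]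

lemma nonneg (h : IsNearOctahedron η a d v) : 0 ≤ η :=
  (abs_nonneg _).trans (h.fst 0)

end IsNearOctahedron

end Metric

section InnerProduct

open scoped InnerProductSpace

variable {V : Type*} [NormedAddCommGroup V] [InnerProductSpace ℝ V]

lemma inner_sub_sub_eq_dist (x y e : V) :
    ⟪x - e, y - e⟫_ℝ = (dist x e ^ 2 + dist y e ^ 2 - dist x y ^ 2) / 2 := by
  have h := norm_sub_sq_real (x - e) (y - e)
  rw [sub_sub_sub_cancel_right] at h
  simp only [dist_eq_norm]
  linarith

lemma IsNearUnit.abs_inner_sub_le {η : ℝ} {x y e : V} (hx : IsNearUnit η x e)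
    (hy : IsNearUnit η y e) (hxy : IsNearUnit η x y) :
    |⟪x - e, y - e⟫_ℝ - 1 / 2| ≤ 3 / 2 * η := by
  rw [inner_sub_sub_eq_dist]
  rw [IsNearUnit, abs_le] at *
  constructor <;> linarith

lemma IsNearUnit.abs_inner_sub_oneAddCos_le {η : ℝ} {x y e : V} (hx : IsNearUnit η x e)
    (hy : IsNearUnit η y e) : |⟪x - e, (x - e) + (y - e)⟫_ℝ - oneAddCos x y| ≤ 2 * η := by
  rw [inner_add_right, inner_sub_sub_eq_dist, inner_sub_sub_eq_dist, dist_self, oneAddCos]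
  rw [IsNearUnit, abs_le] at *
  constructor <;> linarith

namespace IsNearOctahedron

variable {η : ℝ} {a d : V} {v : Fin 4 → V}

lemma abs_mul_oneAddCos_sub_le (h : IsNearOctahedron η a d v) {α δ β γ : ℝ} (hα : 0 ≤ α)
    (hδ : 0 ≤ δ) (hβ : 0 ≤ β) (hγ : 0 ≤ γ)
    (hrel : α • (a - v 1) + δ • (d - v 1) = β • (v 0 - v 1) + γ • (v 2 - v 1)) :
    |(α + δ) * oneAddCos a d - (β + γ)| ≤ (2 * (α + δ) + 3 * (β + γ)) * η := by
  set w := (a - v 1) + (d - v 1) with hw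
  have hpair : α * ⟪a - v 1, w⟫_ℝ + δ * ⟪d - v 1, w⟫_ℝ =
      β * ⟪v 0 - v 1, w⟫_ℝ + γ * ⟪v 2 - v 1, w⟫_ℝ := by
    simpa only [inner_add_left, real_inner_smul_left] using congrArg (⟪·, w⟫_ℝ) hrel
  have ha : |⟪a - v 1, w⟫_ℝ - oneAddCos a d| ≤ 2 * η :=
    (h.fst 1).abs_inner_sub_oneAddCos_le (h.snd 1)
  have hd : |⟪d - v 1, w⟫_ℝ - oneAddCos a d| ≤ 2 * η := by
    rw [hw, add_comm, oneAddCos_comm]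
    exact (h.snd 1).abs_inner_sub_oneAddCos_le (h.fst 1)
  have hv : ∀ x, IsNearUnit η x (v 1) → IsNearUnit η x a → IsNearUnit η x d →
      |⟪x - v 1, w⟫_ℝ - 1| ≤ 3 * η := fun x hx hxa hxd => by
    have h₁ := abs_le.1 (hx.abs_inner_sub_le (h.fst 1) hxa)
    have h₂ := abs_le.1 (hx.abs_inner_sub_le (h.snd 1) hxd)
    rw [hw, inner_add_right, abs_le]
    constructor <;> linarith
  have hv₀ := hv (v 0) (h.cycle 0) (h.fst 0).symm (h.snd 0).symm
  have hv₂ := hv (v 2) (h.cycle 1).symm (h.fst 2).symm (h.snd 2).symm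
  have hscale : ∀ {k z r : ℝ}, 0 ≤ k → |z| ≤ r → -(k * r) ≤ k * z ∧ k * z ≤ k * r :=
    fun hk hz => abs_le.1 (by rw [abs_mul, abs_of_nonneg hk]; gcongr)
  have hα' := hscale hα ha
  have hδ' := hscale hδ hd
  have hβ' := hscale hβ hv₀
  have hγ' := hscale hγ hv₂
  rw [abs_le]
  constructor <;> linarith

lemma oneAddCos_mul_ge (h : IsNearOctahedron η a d v) (hη : η ≤ 1 / 100) :
    1 - 15 * η ≤ oneAddCos (v 0) (v 2) * oneAddCos (v 1) (v 3) := by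
  set p := oneAddCos (v 0) (v 2)
  set q := oneAddCos (v 1) (v 3)
  set x := (v 0 - a) + (v 2 - a)
  set y := (v 1 - a) + (v 3 - a)
  have hdiag : ∀ i j, ‖(v i - a) + (v j - a)‖ ^ 2 ≤ 2 * oneAddCos (v i) (v j) + 4 * η :=
      fun i j => by
    have hi := (abs_le.1 ((h.fst i).symm.abs_inner_sub_oneAddCos_le (h.fst j).symm)).2
    have hj := (abs_le.1 ((h.fst j).symm.abs_inner_sub_oneAddCos_le (h.fst i).symm)).2
    rw [oneAddCos_comm, add_comm] at hj
    rw [← real_inner_self_eq_norm_sq, inner_add_left]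
    linarith
  have hx : ‖x‖ ^ 2 ≤ 2 * p + 4 * η := hdiag 0 2
  have hy : ‖y‖ ^ 2 ≤ 2 * q + 4 * η := hdiag 1 3
  have hcycle : ∀ i, 1 / 2 - 3 / 2 * η ≤ ⟪v i - a, v (i + 1) - a⟫_ℝ := fun i => by
    linarith [(abs_le.1 ((h.fst i).symm.abs_inner_sub_le (h.fst (i + 1)).symm (h.cycle i))).1]
  have hxy : 2 - 6 * η ≤ ⟪x, y⟫_ℝ := by
    have h₁ : 1 / 2 - 3 / 2 * η ≤ ⟪v 2 - a, v 1 - a⟫_ℝ := by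
      rw [real_inner_comm]
      exact hcycle 1
    have h₃ : 1 / 2 - 3 / 2 * η ≤ ⟪v 0 - a, v 3 - a⟫_ℝ := by
      rw [real_inner_comm]
      exact hcycle 3
    have h₀ : 1 / 2 - 3 / 2 * η ≤ ⟪v 0 - a, v 1 - a⟫_ℝ := hcycle 0
    have h₂ : 1 / 2 - 3 / 2 * η ≤ ⟪v 2 - a, v 3 - a⟫_ℝ := hcycle 2
    simp only [x, y, inner_add_left, inner_add_right]
    linarith
  have hη₀ := h.nonneg
  have hcs : (2 - 6 * η) ^ 2 ≤ (2 * p + 4 * η) * (2 * q + 4 * η) :=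
    calc (2 - 6 * η) ^ 2 ≤ ⟪x, y⟫_ℝ ^ 2 := by gcongr; linarith
      _ ≤ (‖x‖ * ‖y‖) ^ 2 := sq_le_sq.2 <| by simpa [abs_mul] using abs_real_inner_le_norm x y
      _ = ‖x‖ ^ 2 * ‖y‖ ^ 2 := mul_pow _ _ _
      _ ≤ (2 * p + 4 * η) * (2 * q + 4 * η) := by
          gcongr; exact (sq_nonneg _).trans hx
  have hp : p ≤ 2 := oneAddCos_le_two _ _
  have hq : q ≤ 2 := oneAddCos_le_two _ _
  nlinarith [mul_nonneg hη₀ (sub_nonneg.2 hp), mul_nonneg hη₀ (sub_nonneg.2 hq),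
    mul_nonneg hη₀ (sub_nonneg.2 hη)]

lemma inner_projection_neg (h : IsNearOctahedron η a d v)
    (had : 2 + 10 * η < dist a d ^ 2) (i : Fin 4) :
    dist a d ^ 2 * ⟪v i - a, v (i + 1) - a⟫_ℝ
      - ⟪v i - a, d - a⟫_ℝ * ⟪v (i + 1) - a, d - a⟫_ℝ < 0 := by
  set x := dist a d ^ 2
  have hη₀ := h.nonneg
  have haxis : ∀ j, x / 2 - η ≤ ⟪v j - a, d - a⟫_ℝ := fun j => by
    have h₁ := (abs_le.1 (h.fst j).symm).1
    have h₂ := (abs_le.1 (h.snd j).symm).2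
    rw [inner_sub_sub_eq_dist, dist_comm d a]
    linarith
  have haxis₀ : 0 ≤ x / 2 - η := by linarith
  have hcycle : ⟪v i - a, v (i + 1) - a⟫_ℝ ≤ 1 / 2 + 3 / 2 * η := by
    linarith [(abs_le.1 ((h.fst i).symm.abs_inner_sub_le (h.fst (i + 1)).symm (h.cycle i))).2]
  have hx : 0 < x * (x / 4 - 1 / 2 - 5 / 2 * η) := mul_pos (by linarith) (by linarith)
  calc x * ⟪v i - a, v (i + 1) - a⟫_ℝ - ⟪v i - a, d - a⟫_ℝ * ⟪v (i + 1) - a, d - a⟫_ℝ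
      ≤ x * (1 / 2 + 3 / 2 * η) - (x / 2 - η) * (x / 2 - η) := by
        gcongr
        · exact haxis₀.trans (haxis i)
        · exact haxis i
        · exact haxis (i + 1)
    _ = -(x * (x / 4 - 1 / 2 - 5 / 2 * η)) - η ^ 2 := by ring
    _ < 0 := by linarith [sq_nonneg η]

end IsNearOctahedron

end InnerProduct

section Estimates

variable {p q r s η : ℝ}

lemma le_and_mul_le_of_abs_mul_sub_le (hη₀ : 0 ≤ η) (hη : η ≤ 1 / 100) (hs : 0 ≤ s) (hp : p ≤ 2)
    (hq : q ≤ 2) (hsp : |s * p - 1| ≤ (2 * s + 3) * η) (hqs : |q - s| ≤ (2 + 3 * s) * η) :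
    3 / 10 ≤ p ∧ 3 / 10 ≤ q ∧ p * q ≤ 1 + 15 * η := by
  obtain ⟨hsp₁, hsp₂⟩ := abs_le.1 hsp
  obtain ⟨hqs₁, hqs₂⟩ := abs_le.1 hqs
  have hsη : s * η ≤ s * (1 / 100) := by gcongr
  have hs_lower : 48 / 100 ≤ s := by nlinarith
  have hp_lower : 3 / 10 ≤ p := by nlinarith
  have hq_lower : 3 / 10 ≤ q := by linarith
  have hprod : s * ((p - 2 * η) * (q - 2 * η)) ≤ s * (1 + 3 * η) ^ 2 :=
    calc s * ((p - 2 * η) * (q - 2 * η)) = s * (p - 2 * η) * (q - 2 * η) := by ring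
      _ ≤ (1 + 3 * η) * (s * (1 + 3 * η)) := by gcongr <;> linarith
      _ = s * (1 + 3 * η) ^ 2 := by ring
  have hprod' := le_of_mul_le_mul_left hprod (by linarith)
  refine ⟨hp_lower, hq_lower, ?_⟩
  nlinarith [mul_nonneg hη₀ (sub_nonneg.2 hp), mul_nonneg hη₀ (sub_nonneg.2 hq),
    mul_nonneg hη₀ (sub_nonneg.2 hη)]

lemma le_of_mul_le_of_le_mul (hη₀ : 0 ≤ η) (hη : η ≤ 1 / 100) (hp : 0 ≤ p)
    (hr : 0 ≤ r) (hpq : p * q ≤ 1 + 15 * η) (hpr : p * r ≤ 1 + 15 * η)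
    (hqr : 1 - 15 * η ≤ q * r) : p ≤ 1 + 93 * η := by
  have hsq : p ^ 2 * (1 - 15 * η) ≤ (1 + 15 * η) ^ 2 :=
    calc p ^ 2 * (1 - 15 * η) ≤ p ^ 2 * (q * r) := by gcongr
      _ = p * q * (p * r) := by ring
      _ ≤ (1 + 15 * η) * (1 + 15 * η) := by gcongr
      _ = (1 + 15 * η) ^ 2 := by ring
  have hpη : p ^ 2 * η ≤ 4 * η := by gcongr; nlinarith
  nlinarith [mul_nonneg hη₀ (sub_nonneg.2 hη)]

end Estimates

section AlternatingForm

variable {V : Type*} [NormedAddCommGroup V] [InnerProductSpace ℝ V] {η : ℝ} {a d : V}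
  {v : Fin 4 → V}

lemma tetRing_rotate (a d : V) (v : Fin 4 → V) :
    tetRing a d (fun i => v (i + 1)) = tetRing a d v :=
  (Equiv.addRight (1 : Fin 4)).surjective.iUnion_comp fun i => convexHull ℝ {a, d, v i, v (i + 1)}

lemma IsNearOctahedron.le_oneAddCos_and_mul_le (h : IsNearOctahedron η a d v) (hη : η ≤ 1 / 100)
    {ω : V →ₗ[ℝ] V →ₗ[ℝ] ℝ} (hω : ω.IsAlt) (hd : ω (d - a) = 0)
    (hpos : ∀ i, 0 < ω (v i - a) (v (i + 1) - a)) (hconv : Convex ℝ (tetRing a d v)) :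
    3 / 10 ≤ oneAddCos a d ∧ 3 / 10 ≤ oneAddCos (v 0) (v 2) ∧
      oneAddCos a d * oneAddCos (v 0) (v 2) ≤ 1 + 15 * η := by
  obtain ⟨α, δ, β, γ, hα, hδ, hβ, hγ, hβγ, hrel⟩ :=
    exists_cone_relation_of_convex hω hd hpos hconv
  have h₁ := h.abs_mul_oneAddCos_sub_le hα hδ hβ hγ hrel
  have h₂ := h.swap.abs_mul_oneAddCos_sub_le hβ hγ hα hδ hrel.symm
  rw [hβγ, mul_one] at h₁
  rw [hβγ, one_mul, mul_one] at h₂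
  exact le_and_mul_le_of_abs_mul_sub_le h.nonneg hη (add_nonneg hα hδ) (oneAddCos_le_two a d)
    (oneAddCos_le_two (v 0) (v 2)) h₁ h₂

lemma IsNearOctahedron.oneAddCos_le (h : IsNearOctahedron η a d v) (hη : η ≤ 1 / 100)
    {ω : V →ₗ[ℝ] V →ₗ[ℝ] ℝ} (hω : ω.IsAlt) (hd : ω (d - a) = 0)
    (hpos : ∀ i, 0 < ω (v i - a) (v (i + 1) - a)) (hconv : Convex ℝ (tetRing a d v)) :
    oneAddCos a d ≤ 1 + 93 * η := by
  obtain ⟨hp, -, hpq⟩ := h.le_oneAddCos_and_mul_le hη hω hd hpos hconv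
  obtain ⟨-, hr, hpr⟩ := h.rotate.le_oneAddCos_and_mul_le hη hω hd (fun i => hpos (i + 1))
    (by rwa [tetRing_rotate])
  exact le_of_mul_le_of_le_mul h.nonneg hη (by linarith) (le_trans (by norm_num) hr) hpq hpr
    (h.oneAddCos_mul_ge hη)

end AlternatingForm

section AxialForm

open Matrix
open scoped InnerProductSpace

/-- The alternating form `(x, y) ↦ det (x, w, y)` on `ℝ³`. Its kernel contains the axis `w`. -/
def axialForm (w : EuclideanSpace ℝ (Fin 3)) :
    EuclideanSpace ℝ (Fin 3) →ₗ[ℝ] EuclideanSpace ℝ (Fin 3) →ₗ[ℝ] ℝ :=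
  LinearMap.mk₂ ℝ (fun x y => x.ofLp ⬝ᵥ (w.ofLp ⨯₃ y.ofLp)) (by simp) (by simp) (by simp)
    (by simp)

lemma axialForm_apply (w x y : EuclideanSpace ℝ (Fin 3)) :
    axialForm w x y = x.ofLp ⬝ᵥ (w.ofLp ⨯₃ y.ofLp) :=
  rfl

lemma axialForm_isAlt (w : EuclideanSpace ℝ (Fin 3)) : (axialForm w).IsAlt := fun _ =>
  dot_cross_self _ _

lemma axialForm_self (w : EuclideanSpace ℝ (Fin 3)) : axialForm w w = 0 :=
  LinearMap.ext fun _ => dot_self_cross _ _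

lemma exists_cross_dot_cross_nonneg {w : EuclideanSpace ℝ (Fin 3)}
    {x : Fin 4 → EuclideanSpace ℝ (Fin 3)} (hx : ∀ i, 0 < axialForm w (x i) (x (i + 1))) :
    ∃ i, 0 ≤ (w.ofLp ⨯₃ (x i).ofLp) ⬝ᵥ (w.ofLp ⨯₃ (x (i + 1)).ofLp) := by
  by_contra! hneg
  -- Two consecutive turns by angles in `(π / 2, π)` add up to a turn by an angle in `(π, 2 * π)`.
  have hside : ∀ i, axialForm w (x i) (x (i + 1 + 1)) < 0 := fun i => by
    have hplane : axialForm w (x i) (x (i + 1 + 1)) *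
        ((w.ofLp ⨯₃ (x (i + 1)).ofLp) ⬝ᵥ (w.ofLp ⨯₃ (x (i + 1)).ofLp)) =
        axialForm w (x (i + 1)) (x (i + 1 + 1)) *
          ((w.ofLp ⨯₃ (x i).ofLp) ⬝ᵥ (w.ofLp ⨯₃ (x (i + 1)).ofLp)) +
        axialForm w (x i) (x (i + 1)) *
          ((w.ofLp ⨯₃ (x (i + 1)).ofLp) ⬝ᵥ (w.ofLp ⨯₃ (x (i + 1 + 1)).ofLp)) := by
      simp only [axialForm_apply, vec3_dotProduct, cross_apply, cons_val]
      ring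
    have h₁ := mul_neg_of_pos_of_neg (hx (i + 1)) (hneg i)
    have h₂ := mul_neg_of_pos_of_neg (hx i) (hneg (i + 1))
    refine neg_of_mul_neg_left (hplane.trans_lt (add_neg h₁ h₂)) ?_
    exact Finset.sum_nonneg fun _ _ => mul_self_nonneg _
  have h₀ : axialForm w (x 0) (x 2) < 0 := hside 0
  have h₂ : axialForm w (x 2) (x 0) < 0 := hside 2
  rw [← (axialForm_isAlt w).neg] at h₂
  linarith

variable {η : ℝ} {a d : EuclideanSpace ℝ (Fin 3)} {v : Fin 4 → EuclideanSpace ℝ (Fin 3)}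

lemma IsNearOctahedron.dist_sq_le (h : IsNearOctahedron η a d v)
    (hpos : ∀ i, 0 < axialForm (d - a) (v i - a) (v (i + 1) - a)) :
    dist a d ^ 2 ≤ 2 + 10 * η := by
  by_contra! had
  obtain ⟨i, hi⟩ := exists_cross_dot_cross_nonneg (x := fun i => v i - a) hpos
  have hproj := h.inner_projection_neg had i
  refine hproj.not_ge (hi.trans_eq ?_)
  rw [cross_dot_cross, dist_comm, dist_eq_norm, ← real_inner_self_eq_norm_sq]
  simp only [EuclideanSpace.inner_eq_star_dotProduct, star_trivial]
  rw [dotProduct_comm (v i - a).ofLp (d - a).ofLp,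
    dotProduct_comm (v i - a).ofLp (v (i + 1) - a).ofLp]
  ring

theorem IsNearOctahedron.abs_dist_sq_sub_two_le (h : IsNearOctahedron η a d v)
    (hη : η ≤ 1 / 100) (hpos : ∀ i, 0 < axialForm (d - a) (v i - a) (v (i + 1) - a))
    (hconv : Convex ℝ (tetRing a d v)) : |dist a d ^ 2 - 2| ≤ 186 * η := by
  have hη₀ := h.nonneg
  have hle := h.oneAddCos_le hη (axialForm_isAlt _) (axialForm_self _) hpos hconv
  rw [oneAddCos] at hle
  rw [abs_le]
  constructor <;> linarith [h.dist_sq_le hpos]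

end AxialForm

section Octahedron

open Matrix
open scoped InnerProductSpace Matrix.Norms.Frobenius

lemma abs_inner_sub_inner_le {V W : Type*} [NormedAddCommGroup V] [InnerProductSpace ℝ V]
    [NormedAddCommGroup W] [InnerProductSpace ℝ W] {x y e : V} {x' y' e' : W} {κ : ℝ}
    (hx : |dist x e ^ 2 - dist x' e' ^ 2| ≤ κ) (hy : |dist y e ^ 2 - dist y' e' ^ 2| ≤ κ)
    (hxy : |dist x y ^ 2 - dist x' y' ^ 2| ≤ κ) :
    |⟪x - e, y - e⟫_ℝ - ⟪x' - e', y' - e'⟫_ℝ| ≤ 3 / 2 * κ := by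
  rw [inner_sub_sub_eq_dist, inner_sub_sub_eq_dist]
  rw [abs_le] at *
  constructor <;> linarith

lemma image_tetRing {E F : Type*} [AddCommGroup E] [Module ℝ E] [AddCommGroup F] [Module ℝ F]
    (f : E →ₗ[ℝ] F) (a d : E) (v : Fin 4 → E) :
    f '' tetRing a d v = tetRing (f a) (f d) fun i => f (v i) := by
  simp only [tetRing, Set.image_iUnion, f.image_convexHull, Set.image_insert_eq,
    Set.image_singleton]

lemma frobSq_eq_norm_sq (F : Matrix (Fin 3) (Fin 3) ℝ) : frobSq F = ‖F‖ ^ 2 :=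
  (frobenius_norm_sq_eq_sum F).symm

lemma distSqSO3_le_sq {F R : Matrix (Fin 3) (Fin 3) ℝ} {r : ℝ}
    (hR : R ∈ specialOrthogonalGroup (Fin 3) ℝ) (hle : ‖F - R‖ ≤ r) : distSqSO3 F ≤ r ^ 2 := by
  obtain ⟨hRorth, hRdet⟩ := mem_specialOrthogonalGroup_iff.1 hR
  have hbdd : BddBelow {s : ℝ | ∃ Q ∈ SO3, s = frobSq (F - Q)} := by
    refine ⟨0, ?_⟩
    rintro _ ⟨Q, -, rfl⟩
    rw [frobSq_eq_norm_sq]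
    positivity
  calc distSqSO3 F ≤ frobSq (F - R) :=
        csInf_le hbdd ⟨R, ⟨(mem_orthogonalGroup_iff' _ _).1 hRorth, hRdet⟩, rfl⟩
    _ = ‖F - R‖ ^ 2 := frobSq_eq_norm_sq _
    _ ≤ r ^ 2 := by gcongr

/-- The point `u i` of a vertex configuration, regarded as a point of Euclidean space, so that
distances are Euclidean. -/
def vertex (u : Fin 6 → Fin 3 → ℝ) (i : Fin 6) : EuclideanSpace ℝ (Fin 3) :=
  WithLp.toLp 2 (u i)

/-- The vertices off the axis `{0, 3}`, in cyclic order around it. -/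
def equator : Fin 4 → Fin 6 :=
  ![1, 4, 2, 5]

/-- The vertices of a tetrahedron as a family; the first one is the base point of `colMat`. -/
def tetVertex (t : Fin 6 × Fin 6 × Fin 6 × Fin 6) : Fin 4 → Fin 6 :=
  ![t.1, t.2.1, t.2.2.1, t.2.2.2]

variable {u : Fin 6 → Fin 3 → ℝ} {t : Fin 6 × Fin 6 × Fin 6 × Fin 6}

lemma enorm3_sub_eq_dist (i j : Fin 6) : enorm3 (u i - u j) = dist (vertex u i) (vertex u j) := by
  rw [EuclideanSpace.dist_eq, enorm3]
  simp [vertex, Real.dist_eq, sq_abs]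

lemma colMat_apply (u : Fin 6 → Fin 3 → ℝ) (t : Fin 6 × Fin 6 × Fin 6 × Fin 6) (i j : Fin 3) :
    colMat u t i j = (vertex u (tetVertex t j.succ) - vertex u (tetVertex t 0)) i := by
  fin_cases j <;> rfl

lemma colMat_transpose_mul_self_apply (u : Fin 6 → Fin 3 → ℝ)
    (t : Fin 6 × Fin 6 × Fin 6 × Fin 6) (i j : Fin 3) :
    ((colMat u t)ᵀ * colMat u t) i j =
      ⟪vertex u (tetVertex t i.succ) - vertex u (tetVertex t 0),
        vertex u (tetVertex t j.succ) - vertex u (tetVertex t 0)⟫_ℝ := by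
  simp only [mul_apply, transpose_apply, colMat_apply, PiLp.inner_apply, RCLike.inner_apply,
    conj_trivial]
  exact Finset.sum_congr rfl fun _ _ => mul_comm _ _

lemma det_colMat (u : Fin 6 → Fin 3 → ℝ) (t : Fin 6 × Fin 6 × Fin 6 × Fin 6) :
    (colMat u t).det = axialForm (vertex u t.2.2.1 - vertex u t.1)
      (vertex u t.2.1 - vertex u t.1) (vertex u t.2.2.2 - vertex u t.1) := by
  rw [axialForm_apply, triple_product_eq_det, ← det_transpose]
  rfl

lemma forall_tetVertex {p : Fin 6 → Fin 6 → Prop} (hrefl : ∀ i, p i i)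
    (hsymm : ∀ i j, p i j → p j i) (hedge : ∀ e ∈ octEdges, p e.1 e.2) (hdiag : p 0 3)
    (ht : t ∈ tets1) (i j : Fin 4) : p (tetVertex t i) (tetVertex t j) := by
  have hcases : ∀ t ∈ tets1, ∀ i j, tetVertex t i = tetVertex t j ∨
      (tetVertex t i, tetVertex t j) ∈ (0, 3) :: octEdges ∨
      (tetVertex t j, tetVertex t i) ∈ (0, 3) :: octEdges := by
    decide +kernel
  have hpair : ∀ e ∈ (0, 3) :: octEdges, p e.1 e.2 := List.forall_mem_cons.2 ⟨hdiag, hedge⟩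
  rcases hcases t ht i j with h | h | h
  · exact h ▸ hrefl _
  · exact hpair _ h
  · exact hsymm _ _ (hpair _ h)

lemma dist_vertex_sq (i j : Fin 6) : dist (vertex u i) (vertex u j) ^ 2 =
    (u i 0 - u j 0) ^ 2 + (u i 1 - u j 1) ^ 2 + (u i 2 - u j 2) ^ 2 := by
  simp [EuclideanSpace.dist_sq_eq, vertex, Fin.sum_univ_three, Real.dist_eq, sq_abs]

lemma dist_vertex_octP_sq_of_mem_octEdges :
    ∀ e ∈ octEdges, dist (vertex octP e.1) (vertex octP e.2) ^ 2 = 1 := by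
  simp only [octEdges, List.forall_mem_cons, dist_vertex_sq, octP, cons_val]
  norm_num [div_pow]

lemma dist_vertex_octP_zero_three_sq : dist (vertex octP 0) (vertex octP 3) ^ 2 = 2 := by
  simp only [dist_vertex_sq, octP, cons_val]
  norm_num

lemma det_colMat_octP (i j : Fin 6) : (colMat octP (0, i, 3, j)).det =
    octP i 2 * (octP j 1 - octP j 0) - (octP i 1 - octP i 0) * octP j 2 := by
  rw [det_colMat, axialForm_apply, vec3_dotProduct, cross_apply]
  simp only [vertex, octP, cons_val, PiLp.sub_apply]
  ring

lemma isNearOctahedron_vertex {η : ℝ}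
    (hedge : ∀ e ∈ octEdges, IsNearUnit η (vertex u e.1) (vertex u e.2)) :
    IsNearOctahedron η (vertex u 0) (vertex u 3) fun i => vertex u (equator i) := by
  simp only [octEdges, List.forall_mem_cons] at hedge
  obtain ⟨h01, h02, h04, h05, h13, h14, h15, h23, h24, h25, h34, h35, -⟩ := hedge
  refine ⟨fun i => ?_, fun i => ?_, fun i => ?_⟩ <;> fin_cases i
  exacts [h01, h04, h02, h05, h13.symm, h34, h23.symm, h35, h14, h24.symm, h25, h15.symm]

lemma axialForm_vertex_pos (hdet : ∀ t ∈ tets1, 0 < detGrad u t) (i : Fin 4) :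
    0 < axialForm (vertex u 3 - vertex u 0) (vertex u (equator i) - vertex u 0)
      (vertex u (equator (i + 1)) - vertex u 0) := by
  simp only [tets1, List.forall_mem_cons] at hdet
  obtain ⟨h14, h15, h24, h25, -⟩ := hdet
  rw [detGrad, det_colMat, det_colMat_octP] at h14 h15 h24 h25
  simp only [octP, cons_val] at h14 h15 h24 h25
  have h2 : 0 < √2 / 2 := by positivity
  have hpos : ∀ {x y : ℝ}, 0 < y → 0 < x / y → 0 < x := fun hy => (div_pos_iff_of_pos_right hy).1
  fin_cases i
  · exact hpos (by linarith) h14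
  · rw [← neg_div_neg_eq, (axialForm_isAlt _).neg] at h24
    exact hpos (by linarith) h24
  · exact hpos (by linarith) h25
  · rw [← neg_div_neg_eq, (axialForm_isAlt _).neg] at h15
    exact hpos (by linarith) h15

lemma octImage_eq_tetRing (u : Fin 6 → Fin 3 → ℝ) :
    octImage u = tetRing (u 0) (u 3) fun i => u (equator i) := by
  have hswap : ∀ i j, ({u 0, u i, u 3, u j} : Set (Fin 3 → ℝ)) = {u 0, u 3, u i, u j} :=
    fun i j => by rw [Set.insert_comm (u i)]
  ext x
  simp only [octImage, tets1, tetRing, Set.mem_iUnion, List.mem_cons, List.not_mem_nil,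
    or_false, exists_prop, or_and_right, exists_or, exists_eq_left, hswap]
  rw [Set.pair_comm (u 1) (u 5), Set.pair_comm (u 2) (u 4)]
  constructor
  · rintro (h | h | h | h)
    exacts [⟨0, h⟩, ⟨3, h⟩, ⟨1, h⟩, ⟨2, h⟩]
  · rintro ⟨i, hi⟩
    fin_cases i
    exacts [.inl hi, .inr (.inr (.inl hi)), .inr (.inr (.inr hi)), .inr (.inl hi)]

lemma convex_tetRing_vertex (hconv : Convex ℝ (octImage u)) :
    Convex ℝ (tetRing (vertex u 0) (vertex u 3) fun i => vertex u (equator i)) := by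
  rw [octImage_eq_tetRing] at hconv
  have himage := hconv.linear_image (WithLp.linearEquiv 2 ℝ (Fin 3 → ℝ)).symm.toLinearMap
  rwa [image_tetRing] at himage

lemma norm_transpose_mul_self_sub_le {w : Fin 6 → Fin 3 → ℝ} {κ : ℝ}
    (h : ∀ i j, |dist (vertex u (tetVertex t i)) (vertex u (tetVertex t j)) ^ 2 -
      dist (vertex w (tetVertex t i)) (vertex w (tetVertex t j)) ^ 2| ≤ κ) :
    ‖(colMat u t)ᵀ * colMat u t - (colMat w t)ᵀ * colMat w t‖ ≤ 9 / 2 * κ := by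
  refine (frobenius_norm_le_card_mul (r := 3 / 2 * κ) fun i j => ?_).trans_eq ?_
  · rw [Matrix.sub_apply, colMat_transpose_mul_self_apply, colMat_transpose_mul_self_apply]
    exact abs_inner_sub_inner_le (h _ _) (h _ _) (h _ _)
  · rw [Fintype.card_fin]
    push_cast
    ring

lemma norm_colMat_le {r : ℝ}
    (h : ∀ i j, dist (vertex u (tetVertex t i)) (vertex u (tetVertex t j)) ≤ r) :
    ‖colMat u t‖ ≤ 3 * r := by
  refine frobenius_norm_le_card_mul (n := Fin 3) fun i j => ?_
  rw [colMat_apply]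
  exact (PiLp.norm_apply_le _ i).trans (dist_eq_norm (vertex u _) _ ▸ h _ _)

lemma exists_norm_gradMat_sub_le_of_le {ε : ℝ} (hε : ε ≤ 1 / 300)
    (hedge : ∀ e ∈ octEdges, |dist (vertex u e.1) (vertex u e.2) - 1| ≤ ε)
    (hdet : ∀ t ∈ tets1, 0 < detGrad u t) (hconv : Convex ℝ (octImage u)) (ht : t ∈ tets1) :
    ∃ R ∈ specialOrthogonalGroup (Fin 3) ℝ,
      ‖gradMat u t - R‖ ≤ ‖(colMat octP t)⁻¹‖ ^ 2 * (2511 * ε) := by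
  have hε₀ : 0 ≤ ε := (abs_nonneg _).trans (hedge (0, 1) (by decide))
  have hnear : ∀ e ∈ octEdges, IsNearUnit (3 * ε) (vertex u e.1) (vertex u e.2) := fun e he => by
    obtain ⟨hlo, hhi⟩ := abs_le.1 (hedge e he)
    rw [IsNearUnit, abs_le]
    constructor <;> nlinarith
  have haxis := (isNearOctahedron_vertex hnear).abs_dist_sq_sub_two_le (by linarith)
    (axialForm_vertex_pos hdet) (convex_tetRing_vertex hconv)
  obtain ⟨R, hR, hle⟩ := exists_specialOrthogonal_norm_mul_inv_sub_le (hdet t ht)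
  refine ⟨R, hR, hle.trans ?_⟩
  gcongr
  refine (norm_transpose_mul_self_sub_le (κ := 558 * ε) <| forall_tetVertex (p := fun i j =>
    |dist (vertex u i) (vertex u j) ^ 2 - dist (vertex octP i) (vertex octP j) ^ 2| ≤ 558 * ε)
    (fun i => by simpa using hε₀) (fun i j h => ?_) (fun e he => ?_) ?_ ht).trans_eq (by ring)
  · rwa [dist_comm (vertex u j), dist_comm (vertex octP j)]
  · rw [dist_vertex_octP_sq_of_mem_octEdges e he]
    exact (hnear e he).trans (by linarith)
  · rw [dist_vertex_octP_zero_three_sq]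
    exact haxis.trans_eq (by ring)

lemma norm_gradMat_sub_one_le {ε : ℝ}
    (hedge : ∀ e ∈ octEdges, |dist (vertex u e.1) (vertex u e.2) - 1| ≤ ε) (ht : t ∈ tets1) :
    ‖gradMat u t - 1‖ ≤ 6 * (1 + ε) * ‖(colMat octP t)⁻¹‖ + 3 := by
  have hε₀ : 0 ≤ ε := (abs_nonneg _).trans (hedge (0, 1) (by decide))
  have hlength : ∀ e ∈ octEdges, dist (vertex u e.1) (vertex u e.2) ≤ 1 + ε := fun e he => by
    linarith [le_of_abs_le (hedge e he)]
  have hdist : ∀ i j, dist (vertex u (tetVertex t i)) (vertex u (tetVertex t j)) ≤ 2 * (1 + ε) :=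
    forall_tetVertex (p := fun i j => dist (vertex u i) (vertex u j) ≤ 2 * (1 + ε))
      (fun i => by rw [dist_self]; positivity) (fun i j h => by rwa [dist_comm])
      (fun e he => by linarith [hlength e he])
      (by linarith [dist_triangle (vertex u 0) (vertex u 1) (vertex u 3),
        hlength (0, 1) (by decide), hlength (1, 3) (by decide)]) ht
  have hone : ‖(1 : Matrix (Fin 3) (Fin 3) ℝ)‖ ≤ 3 :=
    (frobenius_norm_le_card_mul (r := 1) fun i j => by
      rw [one_apply]; split_ifs <;> simp).trans_eq (by simp)
  calc ‖gradMat u t - 1‖ ≤ ‖colMat u t‖ * ‖(colMat octP t)⁻¹‖ + ‖(1 : Matrix _ _ ℝ)‖ :=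
        (norm_sub_le _ _).trans (by gcongr; exact frobenius_norm_mul _ _)
    _ ≤ 3 * (2 * (1 + ε)) * ‖(colMat octP t)⁻¹‖ + 3 := by
        gcongr
        exact norm_colMat_le hdist
    _ = 6 * (1 + ε) * ‖(colMat octP t)⁻¹‖ + 3 := by ring

theorem exists_distSqSO3_gradMat_le :
    ∃ C > 0, ∀ (u : Fin 6 → Fin 3 → ℝ) (ε : ℝ),
      (∀ e ∈ octEdges, |dist (vertex u e.1) (vertex u e.2) - 1| ≤ ε) →
      (∀ t ∈ tets1, 0 < detGrad u t) → Convex ℝ (octImage u) → ∀ t ∈ tets1,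
        distSqSO3 (gradMat u t) ≤ (C * ε) ^ 2 := by
  obtain ⟨B, hB⟩ := Finite.exists_le fun t => ‖(colMat octP t)⁻¹‖
  have hB₀ : 0 ≤ B := (norm_nonneg _).trans (hB (0, 1, 3, 4))
  refine ⟨2511 * B ^ 2 + 1806 * B + 900, by positivity, fun u ε hedge hdet hconv t ht => ?_⟩
  have hε₀ : 0 ≤ ε := (abs_nonneg _).trans (hedge (0, 1) (by decide))
  rcases le_or_gt ε (1 / 300) with hε | hε
  · obtain ⟨R, hR, hle⟩ := exists_norm_gradMat_sub_le_of_le hε hedge hdet hconv ht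
    refine distSqSO3_le_sq hR ?_
    calc ‖gradMat u t - R‖ ≤ ‖(colMat octP t)⁻¹‖ ^ 2 * (2511 * ε) := hle
      _ ≤ B ^ 2 * (2511 * ε) := by gcongr; exact hB t
      _ ≤ (2511 * B ^ 2 + 1806 * B + 900) * ε := by
          have : 0 ≤ (1806 * B + 900) * ε := by positivity
          linarith
  · refine distSqSO3_le_sq (one_mem _) ?_
    calc ‖gradMat u t - 1‖ ≤ 6 * (1 + ε) * ‖(colMat octP t)⁻¹‖ + 3 :=
          norm_gradMat_sub_one_le hedge ht
      _ ≤ 6 * (300 * ε + ε) * B + 3 * (300 * ε) := by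
          gcongr
          · linarith
          · exact hB t
          · linarith
      _ ≤ (2511 * B ^ 2 + 1806 * B + 900) * ε := by
          have : 0 ≤ 2511 * B ^ 2 * ε := by positivity
          linarith

end Octahedron

theorem octahedron_rigidity :
    ∃ C > 0, ∀ u : Fin 6 → Fin 3 → ℝ,
      (∀ t ∈ tets1, 0 < detGrad u t) →
      Convex ℝ (octImage u) →
      ∀ t ∈ tets1,
        distSqSO3 (gradMat u t) ≤
          C * (octEdges.map fun e => (enorm3 (u e.1 - u e.2) - 1) ^ 2).sum := by
  obtain ⟨C, hC, hrigid⟩ := exists_distSqSO3_gradMat_le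
  refine ⟨C ^ 2, by positivity, fun u hdet hconv t ht => ?_⟩
  set S := (octEdges.map fun e => (enorm3 (u e.1 - u e.2) - 1) ^ 2).sum
  have hnonneg : ∀ s ∈ octEdges.map fun e => (enorm3 (u e.1 - u e.2) - 1) ^ 2, 0 ≤ s := by
    simp only [List.forall_mem_map]
    exact fun e _ => sq_nonneg _
  have hedge : ∀ e ∈ octEdges, |dist (vertex u e.1) (vertex u e.2) - 1| ≤ √S := fun e he => by
    rw [← enorm3_sub_eq_dist]
    exact Real.abs_le_sqrt (List.single_le_sum hnonneg _ (List.mem_map_of_mem he))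
  calc distSqSO3 (gradMat u t) ≤ (C * √S) ^ 2 := hrigid u √S hedge hdet hconv t ht
    _ = C ^ 2 * S := by rw [mul_pow, Real.sq_sqrt (List.sum_nonneg hnonneg)]

end
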